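/- Let α ∈ (1,2), let X be a real Banach space, and let {T(t)}_{t>0} be a Riemann-Liouville α-order fractional cosine function on X. Then {T(t)}_{t>0} is a Riemann-Liouville α-order fractional resolvent; in particular, for every x ∈ X and all t,s > 0 there holds T(s) J_t^α T(t)x − J_s^α T(s) T(t)x = (s^{α-2}/Γ(α-1)) J_t^α T(t)x − (t^{α-2}/Γ(α-1)) J_s^α T(s)x. -/

import Mathlib

/-!
Write `S_a(t) = J_t^a T(t)` for the fractional integrals of the family, `g_a(t) = t^(a-1) / Γ(a)`,
`c = α - 1` and `δ = 2 - α`. By Banach-Steinhaus the limit at `0` gives `‖T(σ)‖ ≤ M σ^(c-1)` on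
each `(0, b]` (`IsRLFracCosine.tame`). This integrable bound makes each `S_a(t)` a bounded operator
(`rlOp`), justifies every use of Fubini, and yields `J^a S_b = S_(a+b)` through the Beta integral
(`semigroup`).

*Resolvent equation.* The functional equation reads
`S_1(t+s) = S_δ(t) S_1(s) + S_1(t) S_δ(s) - Γ(δ)⁻¹ Q(t,s)`, where `Q` carries the kernel
`(t+s-σ-τ)^(δ-1)`. Integrate it over `(0,t)` in the first variable, over `(0,s)` in the second, and
subtract: everything depending on `t+s` cancels (`Adm₂.integral_Q_sub`, `Tame.integral_shift`),
leaving `S_2(t) S_δ(s) - S_δ(t) S_2(s) = S_2(t) - S_2(s)` (`Tame.separated`). Applying `J^c` in both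
variables gives
`S_(α+1)(t) S_1(s) - S_1(t) S_(α+1)(s) = g_α(s) S_(α+1)(t) - g_α(t) S_(α+1)(s)`
(`Tame.integrated`), and differentiating once in `t` and once in `s` gives the resolvent equation
(`Tame.resolvent_eq`).

*Commutativity.* The right side of the resolvent equation is antisymmetric in `(t,s)`, so
`K(t,s) = T(t)T(s)x - T(s)T(t)x` satisfies `J_t^α K = J_s^α K`, hence `J_t^(nα) K = J_s^(nα) K` for
all `n ≥ 1` (`Tame.commutator_iterate`). The right side is `O(s^(nα) / Γ(nα))`, so the moments
`∫_0^t (u^α)^n u^(α-1) K(t-u,s) du` are `O((s^α)^n)`. The moment lemma `moment` forces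
`K(t-u,s) = 0` for `s < u < t`, and `t` is arbitrary (`Tame.commute`).
-/

open MeasureTheory Filter Topology Set

/-- Riemann-Liouville fractional integral of order `β` of `f` at `t`:
`J_t^β f(t) = (1/Γ(β)) ∫_0^t (t-σ)^{β-1} f(σ) dσ`. -/
noncomputable def RLint {X : Type*} [NormedAddCommGroup X] [NormedSpace ℝ X]
    (β t : ℝ) (f : ℝ → X) : X :=
  (Real.Gamma β)⁻¹ • ∫ σ in (0:ℝ)..t, (t - σ) ^ (β - 1) • f σ

/-- `{T(t)}_{t>0}` is a Riemann-Liouville `α`-order fractional cosine function. -/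
def IsRLFracCosine {X : Type*} [NormedAddCommGroup X] [NormedSpace ℝ X]
    (α : ℝ) (T : ℝ → X →L[ℝ] X) : Prop :=
  (∀ x : X, ContinuousOn (fun t => T t x) (Set.Ioi (0:ℝ))) ∧
  (∀ x : X, Tendsto (fun t : ℝ => t ^ (2 - α) • T t x) (𝓝[>] (0:ℝ))
      (𝓝 ((Real.Gamma (α - 1))⁻¹ • x))) ∧
  (∀ x : X, ∀ t > (0:ℝ), ∀ s > (0:ℝ),
    Real.Gamma (2 - α) • (∫ σ in (0:ℝ)..(t + s), T σ x) =
      (∫ σ in (0:ℝ)..t, ∫ τ in (0:ℝ)..s, (t - σ) ^ (1 - α) • T σ (T τ x)) +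
      (∫ σ in (0:ℝ)..t, ∫ τ in (0:ℝ)..s, (s - τ) ^ (1 - α) • T σ (T τ x)) -
      (∫ σ in (0:ℝ)..t, ∫ τ in (0:ℝ)..s, (t + s - σ - τ) ^ (1 - α) • T σ (T τ x)))

/-- `{T(t)}_{t>0}` is a Riemann-Liouville `α`-order fractional resolvent. -/
def IsRLFracResolvent {X : Type*} [NormedAddCommGroup X] [NormedSpace ℝ X]
    (α : ℝ) (T : ℝ → X →L[ℝ] X) : Prop :=
  (∀ x : X, ContinuousOn (fun t => T t x) (Set.Ioi (0:ℝ)) ∧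
    Tendsto (fun t : ℝ => (Real.Gamma (α - 1) * t ^ (2 - α)) • T t x) (𝓝[>] (0:ℝ)) (𝓝 x)) ∧
  (∀ t > (0:ℝ), ∀ s > (0:ℝ), ∀ x : X, T s (T t x) = T t (T s x)) ∧
  (∀ x : X, ∀ t > (0:ℝ), ∀ s > (0:ℝ),
    T s (RLint α t (fun σ => T σ x)) - RLint α s (fun σ => T σ (T t x)) =
      (s ^ (α - 2) / Real.Gamma (α - 1)) • RLint α t (fun σ => T σ x) -
      (t ^ (α - 2) / Real.Gamma (α - 1)) • RLint α s (fun σ => T σ x))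

section

set_option linter.unusedSectionVars false

/-! ### Riemann-Liouville integrals of functions with a power singularity at zero -/

/-- The Beta integral on `(0, t)`, with integrability of its integrand. -/
lemma beta_unit {a b : ℝ} (ha : 0 < a) (hb : 0 < b) {t : ℝ} (ht : 0 < t) :
    IntervalIntegrable (fun σ : ℝ => (t - σ) ^ (a - 1) * σ ^ (b - 1)) volume 0 t ∧
    ∫ σ in (0:ℝ)..t, (t - σ) ^ (a - 1) * σ ^ (b - 1) =
      Real.Gamma a * Real.Gamma b / Real.Gamma (a + b) * t ^ (a + b - 1) := by
  have key : ∀ σ ∈ uIoc (0:ℝ) t, (((t - σ) ^ (a - 1) * σ ^ (b - 1) : ℝ) : ℂ) =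
      (σ : ℂ) ^ ((b : ℂ) - 1) * ((t : ℂ) - σ) ^ ((a : ℂ) - 1) := by
    intro σ hσ
    rw [uIoc_of_le ht.le] at hσ
    rw [mul_comm]
    push_cast
    rw [Complex.ofReal_cpow hσ.1.le, Complex.ofReal_cpow (sub_nonneg.2 hσ.2)]
    push_cast
    rfl
  have hval : ∫ σ in (0:ℝ)..t, (t - σ) ^ (a - 1) * σ ^ (b - 1) =
      Real.Gamma a * Real.Gamma b / Real.Gamma (a + b) * t ^ (a + b - 1) := by
    have h := Complex.betaIntegral_scaled b a ht
    rw [← intervalIntegral.integral_congr_ae (Eventually.of_forall key),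
      Complex.betaIntegral_eq_Gamma_mul_div _ _ (by simpa) (by simpa),
      intervalIntegral.integral_ofReal] at h
    rw [← Complex.ofReal_add, Complex.Gamma_ofReal, Complex.Gamma_ofReal, Complex.Gamma_ofReal,
      ← Complex.ofReal_one, ← Complex.ofReal_sub, ← Complex.ofReal_cpow ht.le] at h
    norm_cast at h
    rw [h, add_comm b a]; ring
  refine ⟨?_, hval⟩
  by_contra hcon
  rw [intervalIntegral.integral_undef hcon] at hval
  have : 0 < Real.Gamma a * Real.Gamma b / Real.Gamma (a + b) * t ^ (a + b - 1) := by
    have := Real.Gamma_pos_of_pos ha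
    have := Real.Gamma_pos_of_pos hb
    have := Real.Gamma_pos_of_pos (add_pos ha hb)
    positivity
  exact absurd hval this.ne

lemma beta_shift {a b : ℝ} (ha : 0 < a) (hb : 0 < b) {r t : ℝ} (ht : r < t) :
    IntervalIntegrable (fun σ : ℝ => (t - σ) ^ (a - 1) * (σ - r) ^ (b - 1)) volume r t ∧
    ∫ σ in r..t, (t - σ) ^ (a - 1) * (σ - r) ^ (b - 1) =
      Real.Gamma a * Real.Gamma b / Real.Gamma (a + b) * (t - r) ^ (a + b - 1) := by
  obtain ⟨h1, h2⟩ := beta_unit ha hb (sub_pos.2 ht)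
  constructor
  · have := h1.comp_sub_right r
    simpa [sub_sub_sub_cancel_right] using this
  · rw [← h2]
    have := intervalIntegral.integral_comp_sub_right (a := r) (b := t)
      (fun σ : ℝ => (t - r - σ) ^ (a - 1) * σ ^ (b - 1)) r
    simpa [sub_sub_sub_cancel_right] using this

variable {X : Type*} [NormedAddCommGroup X] [NormedSpace ℝ X] [CompleteSpace X]

/-- Admissible functions: continuous on `(0, ∞)` and `O(σ^(c-1))` near `0`. For `c > 0` these have
Riemann-Liouville integrals of every positive order. -/
def Adm (c : ℝ) (f : ℝ → X) : Prop :=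
  ContinuousOn f (Ioi 0) ∧ ∀ b > 0, ∃ M, ∀ σ ∈ Ioc 0 b, ‖f σ‖ ≤ M * σ ^ (c - 1)

lemma Adm.intervalIntegrable {c : ℝ} (hc : 0 < c) {f : ℝ → X} (hf : Adm c f) {a t : ℝ}
    (ha : 0 < a) (ht : 0 < t) :
    IntervalIntegrable (fun σ => (t - σ) ^ (a - 1) • f σ) volume 0 t := by
  obtain ⟨M, hM⟩ := hf.2 t ht
  refine ((beta_unit ha hc ht).1.const_mul M).mono_fun' ?_ ?_
  · rw [uIoc_of_le ht.le]
    refine AEStronglyMeasurable.smul (Measurable.aestronglyMeasurable (by fun_prop)) ?_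
    exact (hf.1.mono Ioc_subset_Ioi_self).aestronglyMeasurable measurableSet_Ioc
  · rw [uIoc_of_le ht.le]
    refine (ae_restrict_mem measurableSet_Ioc).mono fun σ hσ => ?_
    have h0 : 0 ≤ (t - σ) ^ (a - 1) := Real.rpow_nonneg (sub_nonneg.2 hσ.2) _
    beta_reduce
    rw [norm_smul, Real.norm_of_nonneg h0]
    calc _ ≤ (t - σ) ^ (a - 1) * (M * σ ^ (c - 1)) := by gcongr; exact hM σ hσ
      _ = _ := by ring

/-- The semigroup law `J^a J^b = J^(a+b)`: Fubini on the triangle `0 < r < σ < t`, the inner integral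
in `σ` being a Beta integral. -/
lemma semigroup {c : ℝ} (hc : 0 < c) {f : ℝ → X} (hf : Adm c f) {a b t : ℝ}
    (ha : 0 < a) (hb : 0 < b) (ht : 0 < t) :
    IntervalIntegrable (fun σ => (t - σ) ^ (a - 1) • RLint b σ f) volume 0 t ∧
    RLint a t (fun σ => RLint b σ f) = RLint (a + b) t f := by
  set μ : Measure ℝ := volume.restrict (Ioc 0 t) with hμ
  obtain ⟨M, hM⟩ := hf.2 t ht
  let k : ℝ → ℝ → ℝ := fun σ r => if r < σ then (t - σ) ^ (a - 1) * (σ - r) ^ (b - 1) else 0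
  have hkm : Measurable (Function.uncurry k) := by
    refine Measurable.ite (measurableSet_lt measurable_snd measurable_fst) ?_ measurable_const
    fun_prop
  have hk0 : ∀ σ ∈ Ioc 0 t, ∀ r, 0 ≤ k σ r := by
    intro σ hσ r
    simp only [k]
    split_ifs with h
    · exact mul_nonneg (Real.rpow_nonneg (sub_nonneg.2 hσ.2) _)
        (Real.rpow_nonneg (sub_nonneg.2 h.le) _)
    · exact le_rfl
  have hfm : AEStronglyMeasurable f μ :=
    (hf.1.mono Ioc_subset_Ioi_self).aestronglyMeasurable measurableSet_Ioc
  -- the inner integral in `σ`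
  have hind : ∀ r ∈ Ioc 0 t, (fun σ => k σ r) =ᵐ[μ]
      (Ioc r t).indicator (fun σ => (t - σ) ^ (a - 1) * (σ - r) ^ (b - 1)) := by
    intro r hr
    refine (ae_restrict_mem measurableSet_Ioc).mono fun σ hσ => ?_
    simp only [k, indicator, mem_Ioc]
    by_cases h : r < σ <;> simp [h, hσ.2]
  have hki : ∀ r ∈ Ioo 0 t, Integrable (fun σ => k σ r) μ := by
    intro r hr
    refine Integrable.congr ?_ (hind r ⟨hr.1, hr.2.le⟩).symm
    rw [integrable_indicator_iff measurableSet_Ioc]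
    have := (beta_shift ha hb hr.2).1
    rw [intervalIntegrable_iff_integrableOn_Ioc_of_le hr.2.le] at this
    exact IntegrableOn.mono_measure this Measure.restrict_le_self
  have hkv : ∀ r ∈ Ioo 0 t, ∫ σ, k σ r ∂μ =
      Real.Gamma a * Real.Gamma b / Real.Gamma (a + b) * (t - r) ^ (a + b - 1) := by
    intro r hr
    rw [integral_congr_ae (hind r ⟨hr.1, hr.2.le⟩), integral_indicator measurableSet_Ioc, hμ,
      Measure.restrict_restrict measurableSet_Ioc,
      inter_eq_left.2 (Ioc_subset_Ioc_left hr.1.le), ← intervalIntegral.integral_of_le hr.2.le,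
      (beta_shift ha hb hr.2).2]
  have hIoo : ∀ᵐ r ∂μ, r ∈ Ioo 0 t := by
    rw [hμ, ← Measure.restrict_congr_set Ioo_ae_eq_Ioc]
    exact ae_restrict_mem measurableSet_Ioo
  have hprod : Integrable (Function.uncurry fun σ r => k σ r • f r) (μ.prod μ) := by
    have hm : AEStronglyMeasurable (Function.uncurry fun σ r => k σ r • f r) (μ.prod μ) :=
      hkm.aestronglyMeasurable.smul hfm.comp_snd
    rw [integrable_prod_iff' hm]
    constructor
    · filter_upwards [hIoo] with r hr
      exact (hki r hr).smul_const (f r)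
    · have h2 : Integrable (fun r => (Real.Gamma a * Real.Gamma b / Real.Gamma (a + b)) *
          ‖(t - r) ^ (a + b - 1) • f r‖) μ := by
        have := hf.intervalIntegrable hc (add_pos ha hb) ht
        rw [intervalIntegrable_iff_integrableOn_Ioc_of_le ht.le] at this
        exact (Integrable.norm this).const_mul _
      refine h2.congr ?_
      filter_upwards [hIoo] with r hr
      have : ∀ᵐ σ ∂μ, ‖Function.uncurry (fun σ r => k σ r • f r) (σ, r)‖ = k σ r * ‖f r‖ := by
        refine (ae_restrict_mem measurableSet_Ioc).mono fun σ hσ => ?_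
        simp only [Function.uncurry, norm_smul]
        rw [Real.norm_of_nonneg (hk0 σ hσ r)]
      rw [integral_congr_ae this, integral_mul_const, hkv r hr, norm_smul,
        Real.norm_of_nonneg (Real.rpow_nonneg (sub_nonneg.2 hr.2.le) _)]
      ring
  have hinner : ∀ᵐ σ ∂μ, ∫ r, k σ r • f r ∂μ =
      Real.Gamma b • ((t - σ) ^ (a - 1) • RLint b σ f) := by
    refine (ae_restrict_mem measurableSet_Ioc).mono fun σ hσ => ?_
    have h1 : ∀ᵐ r ∂μ, k σ r • f r = (Ioo 0 σ).indicator
        (fun r => (t - σ) ^ (a - 1) • (σ - r) ^ (b - 1) • f r) r := by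
      refine (ae_restrict_mem measurableSet_Ioc).mono fun r hr => ?_
      simp only [k, indicator, mem_Ioo, hr.1, true_and]
      split_ifs <;> simp [smul_smul]
    rw [integral_congr_ae h1, integral_indicator measurableSet_Ioo, hμ,
      Measure.restrict_restrict measurableSet_Ioo,
      inter_eq_left.2 (Ioo_subset_Ioc_self.trans (Ioc_subset_Ioc_right hσ.2)),
      integral_smul, ← integral_Ioc_eq_integral_Ioo, ← intervalIntegral.integral_of_le hσ.1.le,
      RLint, smul_comm (Real.Gamma b), smul_smul (Real.Gamma b),
      mul_inv_cancel₀ (Real.Gamma_pos_of_pos hb).ne', one_smul]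
  have hΓb := (Real.Gamma_pos_of_pos hb).ne'
  have hΓa := (Real.Gamma_pos_of_pos ha).ne'
  constructor
  · rw [intervalIntegrable_iff_integrableOn_Ioc_of_le ht.le]
    refine ((hprod.integral_prod_left.congr hinner).smul (Real.Gamma b)⁻¹).congr ?_
    filter_upwards with σ
    simp [smul_smul, hΓb]
  · have hsw := integral_integral_swap hprod
    rw [integral_congr_ae hinner, integral_smul] at hsw
    have h3 : ∀ᵐ r ∂μ, ∫ σ, k σ r • f r ∂μ =
        (Real.Gamma a * Real.Gamma b / Real.Gamma (a + b)) • (t - r) ^ (a + b - 1) • f r := by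
      filter_upwards [hIoo] with r hr
      rw [integral_smul_const, hkv r hr, smul_smul]
    rw [integral_congr_ae h3, integral_smul, hμ, ← intervalIntegral.integral_of_le ht.le,
      ← intervalIntegral.integral_of_le ht.le] at hsw
    have h4 := congrArg (fun y => ((Real.Gamma b)⁻¹ * (Real.Gamma a)⁻¹) • y) hsw
    simp only [smul_smul] at h4
    rw [RLint, RLint]
    convert h4 using 2
    · field_simp
    · field_simp

/-! ### A moment lemma -/

/-- If the moments `∫_0^t (u^α)^m f(u) du` grow at most like `r^m`, then `f` carries no mass beyond
`u^α = r`. For `R = ρ^α > r`, the integrals `∫_0^t exp(-(u^α/R)^N) f(u) du` tend, as `N → ∞`, to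
`∫_0^ρ f` by dominated convergence, and to `∫_0^t f` by expanding the exponential and bounding the
terms of positive degree by `C (exp((r/R)^N) - 1)`. -/
lemma moment {t ρ r C α : ℝ} {f : ℝ → X} (hα : 0 < α) (hr : 0 < r) (hρ : 0 < ρ)
    (hrρ : r < ρ ^ α) (hρt : ρ ≤ t)
    (hf : IntervalIntegrable f volume 0 t)
    (hC : ∀ m : ℕ, ‖∫ u in (0:ℝ)..t, (u ^ α) ^ m • f u‖ ≤ C * r ^ m) :
    ∫ u in (0:ℝ)..ρ, f u = ∫ u in (0:ℝ)..t, f u := by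
  have ht : 0 < t := hρ.trans_le hρt
  set R := ρ ^ α with hR
  have hR0 : 0 < R := Real.rpow_pos_of_pos hρ _
  have hfm := hf.aestronglyMeasurable_restrict_uIoc
  have lim1 : Tendsto (fun N : ℕ => ∫ u in (0:ℝ)..t, Real.exp (-(u ^ α / R) ^ N) • f u) atTop
      (𝓝 (∫ u in (0:ℝ)..ρ, f u)) := by
    have e : ∫ u in (0:ℝ)..ρ, f u = ∫ u in (0:ℝ)..t, (Ioc 0 ρ).indicator f u := by
      rw [intervalIntegral.integral_of_le hρ.le, intervalIntegral.integral_of_le ht.le,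
        integral_indicator measurableSet_Ioc, Measure.restrict_restrict measurableSet_Ioc,
        inter_eq_left.2 (Ioc_subset_Ioc_right hρt)]
    rw [e]
    refine intervalIntegral.tendsto_integral_filter_of_dominated_convergence (fun u => ‖f u‖)
      (Eventually.of_forall fun N => ?_) (Eventually.of_forall fun N =>
        Eventually.of_forall fun u hu => ?_) hf.norm ?_
    · exact AEStronglyMeasurable.smul (by fun_prop) hfm
    · rw [uIoc_of_le ht.le] at hu
      rw [norm_smul, Real.norm_of_nonneg (Real.exp_pos _).le]
      refine mul_le_of_le_one_left (norm_nonneg _) (Real.exp_le_one_iff.2 ?_)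
      have := Real.rpow_nonneg hu.1.le α
      have : 0 ≤ (u ^ α / R) ^ N := by positivity
      linarith
    · filter_upwards [Measure.ae_ne volume ρ] with u hne hu
      rw [uIoc_of_le ht.le] at hu
      have h0 : 0 ≤ u ^ α / R := div_nonneg (Real.rpow_nonneg hu.1.le α) hR0.le
      rcases lt_or_gt_of_ne hne with h | h
      · have h1 : u ^ α / R < 1 := by
          rw [div_lt_one hR0]; exact Real.rpow_lt_rpow hu.1.le h hα
        have := (tendsto_pow_atTop_nhds_zero_of_lt_one h0 h1).neg.rexp.smul_const (f u)
        simpa [indicator, hu.1, h.le] using this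
      · have h1 : 1 < u ^ α / R := by
          rw [one_lt_div hR0]; exact Real.rpow_lt_rpow hρ.le h hα
        have := (Real.tendsto_exp_neg_atTop_nhds_zero.comp
          (tendsto_pow_atTop_atTop_of_one_lt h1)).smul_const (f u)
        simpa [indicator, h.not_ge] using this
  have hq0 : 0 < r / R := div_pos hr hR0
  have hq1 : r / R < 1 := (div_lt_one hR0).2 hrρ
  have series : ∀ N : ℕ, HasSum (fun k : ℕ => ∫ u in (0:ℝ)..t,
      ((k.factorial : ℝ)⁻¹ * (-(u ^ α / R) ^ N) ^ k) • f u)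
      (∫ u in (0:ℝ)..t, Real.exp (-(u ^ α / R) ^ N) • f u) := by
    intro N
    set B := (t ^ α / R) ^ N with hB
    have hsum : Summable fun k : ℕ => (k.factorial : ℝ)⁻¹ * B ^ k := by
      simpa [div_eq_inv_mul] using Real.summable_pow_div_factorial B
    refine intervalIntegral.hasSum_integral_of_dominated_convergence
      (fun k u => ((k.factorial : ℝ)⁻¹ * B ^ k) * ‖f u‖) (fun k => ?_) (fun k =>
        Eventually.of_forall fun u hu => ?_) (Eventually.of_forall fun u hu => ?_) ?_
        (Eventually.of_forall fun u hu => ?_)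
    · exact AEStronglyMeasurable.smul (by fun_prop) hfm
    · rw [uIoc_of_le ht.le] at hu
      have h0 : 0 ≤ u ^ α := Real.rpow_nonneg hu.1.le α
      have h1 : u ^ α ≤ t ^ α := Real.rpow_le_rpow hu.1.le hu.2 hα.le
      rw [norm_smul, norm_mul, norm_inv, norm_pow, norm_neg, Real.norm_natCast,
        Real.norm_of_nonneg (by positivity : 0 ≤ (u ^ α / R) ^ N)]
      rw [hB]
      gcongr
    · exact hsum.mul_right _
    · simp_rw [tsum_mul_right]
      exact hf.norm.const_mul _
    · have := (NormedSpace.expSeries_div_hasSum_exp (𝔸 := ℝ) (-(u ^ α / R) ^ N)).smul_const (f u)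
      simpa [div_eq_inv_mul, Real.exp_eq_exp_ℝ] using this
  have bnd : ∀ N k : ℕ, ‖∫ u in (0:ℝ)..t,
      ((k.factorial : ℝ)⁻¹ * (-(u ^ α / R) ^ N) ^ k) • f u‖ ≤
      C * ((k.factorial : ℝ)⁻¹ * ((r / R) ^ N) ^ k) := by
    intro N k
    have e : ∀ u : ℝ, ((k.factorial : ℝ)⁻¹ * (-(u ^ α / R) ^ N) ^ k) • f u =
        ((k.factorial : ℝ)⁻¹ * (-1) ^ k * (R⁻¹) ^ (N * k)) • (u ^ α) ^ (N * k) • f u := by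
      intro u
      rw [smul_smul]
      congr 1
      rw [neg_pow, ← pow_mul, div_pow, inv_pow]
      ring
    simp_rw [e]
    rw [intervalIntegral.integral_smul, norm_smul, norm_mul, norm_mul, norm_pow, norm_neg,
      norm_one, one_pow, mul_one, norm_inv, Real.norm_natCast, norm_pow, norm_inv,
      Real.norm_of_nonneg hR0.le]
    calc _ ≤ (k.factorial : ℝ)⁻¹ * R⁻¹ ^ (N * k) * (C * r ^ (N * k)) := by
          gcongr; exact hC _
      _ = _ := by rw [← pow_mul, div_pow, inv_pow]; ring
  have lim2 : Tendsto (fun N : ℕ => ∫ u in (0:ℝ)..t, Real.exp (-(u ^ α / R) ^ N) • f u) atTop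
      (𝓝 (∫ u in (0:ℝ)..t, f u)) := by
    rw [tendsto_iff_norm_sub_tendsto_zero]
    refine squeeze_zero (g := fun N : ℕ => C * (Real.exp ((r / R) ^ N) - 1)) (fun _ => norm_nonneg _)
      (fun N => ?_) ?_
    · have h1 := (hasSum_nat_add_iff' 1).2 (series N)
      have h2 := (NormedSpace.expSeries_div_hasSum_exp (𝔸 := ℝ) ((r / R) ^ N)).mul_left C
      rw [← Real.exp_eq_exp_ℝ] at h2
      have h3 := (hasSum_nat_add_iff' 1).2 h2
      simp only [Finset.range_one, Finset.sum_singleton, Nat.factorial_zero, Nat.cast_one, inv_one,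
        pow_zero, mul_one, one_smul, div_one] at h1 h3
      have := h1.norm_le_of_bounded h3 (fun k => by
        refine (bnd N (k + 1)).trans (le_of_eq ?_)
        ring)
      rw [mul_sub, mul_one]; exact this
    · have := ((tendsto_pow_atTop_nhds_zero_of_lt_one hq0.le hq1).rexp.sub_const 1).const_mul C
      simpa using this
  exact tendsto_nhds_unique lim1 lim2

/-! ### Fractional integrals of an operator family -/

/-- A strongly continuous operator family on `(0, ∞)` with `‖T(σ)‖ = O(σ^(c-1))` near `0`, where
`c > 0`. -/
structure Tame (c : ℝ) (T : ℝ → X →L[ℝ] X) : Prop where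
  pos : 0 < c
  cont : ∀ x, ContinuousOn (fun t => T t x) (Ioi 0)
  bound : ∀ b > 0, ∃ M, 0 ≤ M ∧ ∀ σ ∈ Ioc 0 b, ‖T σ‖ ≤ M * σ ^ (c - 1)

/-- The functions `σ ↦ σ^(2-α) T(σ)x` extend continuously to `[0, b]`, so the operators
`σ^(2-α) T(σ)` are pointwise, hence uniformly, bounded on `(0, b]`. -/
lemma IsRLFracCosine.tame {α : ℝ} (hα : α ∈ Ioo (1:ℝ) 2) {T : ℝ → X →L[ℝ] X}
    (hT : IsRLFracCosine α T) : Tame (α - 1) T := by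
  refine ⟨sub_pos.2 hα.1, hT.1, fun b hb => ?_⟩
  have h : ∀ x, ∃ C, ∀ i : Ioc 0 b, ‖((i : ℝ) ^ (2 - α) • T i) x‖ ≤ C := by
    intro x
    let f : ℝ → X := Function.update (fun t : ℝ => t ^ (2 - α) • T t x) 0
      ((Real.Gamma (α - 1))⁻¹ • x)
    have hf : ContinuousOn f (Icc 0 b) := by
      intro t ht
      rcases ht.1.eq_or_lt with rfl | h0
      · have h1 : Tendsto f (𝓝[>] 0) (𝓝 ((Real.Gamma (α - 1))⁻¹ • x)) := by
          refine (hT.2.1 x).congr' ?_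
          filter_upwards [self_mem_nhdsWithin] with t ht
          simp [f, Function.update_of_ne (mem_Ioi.1 ht).ne']
        have h2 : f 0 = (Real.Gamma (α - 1))⁻¹ • x := by simp [f]
        have h3 : ContinuousWithinAt f (Ioi 0) 0 := by rw [ContinuousWithinAt, h2]; exact h1
        exact (continuousWithinAt_Ioi_iff_Ici.1 h3).mono Icc_subset_Ici_self
      · have h1 : ContinuousAt (fun t : ℝ => t ^ (2 - α) • T t x) t :=
          (Real.continuousAt_rpow_const t _ (Or.inl h0.ne')).smul
            ((hT.1 x).continuousAt (Ioi_mem_nhds h0))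
        refine ContinuousAt.continuousWithinAt (h1.congr ?_)
        filter_upwards [Ioi_mem_nhds h0] with u hu
        simp [f, Function.update_of_ne (mem_Ioi.1 hu).ne']
    obtain ⟨C, hC⟩ := isCompact_Icc.exists_bound_of_continuousOn hf
    refine ⟨C, fun i => ?_⟩
    have := hC i ⟨i.2.1.le, i.2.2⟩
    simpa [f, Function.update_of_ne i.2.1.ne'] using this
  obtain ⟨C, hC⟩ := banach_steinhaus h
  refine ⟨max C 0, le_max_right _ _, fun σ hσ => ?_⟩
  have h1 := (hC ⟨σ, hσ⟩).trans (le_max_left C 0)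
  have h2 : 0 < σ ^ (2 - α) := Real.rpow_pos_of_pos hσ.1 _
  rw [norm_smul, Real.norm_of_nonneg h2.le] at h1
  have h3 : σ ^ (α - 1 - 1) = (σ ^ (2 - α))⁻¹ := by
    rw [← Real.rpow_neg hσ.1.le]; congr 1; ring
  rw [h3, ← div_eq_mul_inv, le_div_iff₀ h2, mul_comm]
  exact h1

namespace Tame

variable {c : ℝ} {T : ℝ → X →L[ℝ] X}

lemma adm (h : Tame c T) (y : X) : Adm c (fun σ => T σ y) := by
  refine ⟨h.cont y, fun b hb => ?_⟩
  obtain ⟨M, hM0, hM⟩ := h.bound b hb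
  refine ⟨M * ‖y‖, fun σ hσ => ?_⟩
  calc ‖T σ y‖ ≤ ‖T σ‖ * ‖y‖ := (T σ).le_opNorm y
    _ ≤ (M * σ ^ (c - 1)) * ‖y‖ := by gcongr; exact hM σ hσ
    _ = _ := by ring

lemma intervalIntegrable (h : Tame c T) {a t : ℝ} (ha : 0 < a) (ht : 0 < t) (y : X) :
    IntervalIntegrable (fun σ => (t - σ) ^ (a - 1) • T σ y) volume 0 t :=
  (h.adm y).intervalIntegrable h.pos ha ht

lemma exists_op (h : Tame c T) {a t : ℝ} (ha : 0 < a) (ht : 0 < t) :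
    ∃ L : X →L[ℝ] X, ∀ y, L y = RLint a t (fun σ => T σ y) := by
  obtain ⟨M, hM0, hM⟩ := h.bound t ht
  let L : X →ₗ[ℝ] X :=
    { toFun := fun y => RLint a t (fun σ => T σ y)
      map_add' := fun y z => by
        simp only [RLint, map_add, smul_add]
        rw [intervalIntegral.integral_add (h.intervalIntegrable ha ht y)
          (h.intervalIntegrable ha ht z), smul_add]
      map_smul' := fun r y => by
        simp only [RLint, map_smul, RingHom.id_apply]
        simp_rw [smul_comm _ r]
        rw [intervalIntegral.integral_smul, smul_comm] }
  refine ⟨L.mkContinuous (|(Real.Gamma a)⁻¹| *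
    ∫ σ in (0:ℝ)..t, M * ((t - σ) ^ (a - 1) * σ ^ (c - 1))) (fun y => ?_), fun y => rfl⟩
  change ‖RLint a t (fun σ => T σ y)‖ ≤ _
  rw [RLint, norm_smul, Real.norm_eq_abs, mul_assoc]
  gcongr
  rw [← intervalIntegral.integral_mul_const]
  refine intervalIntegral.norm_integral_le_of_norm_le ht.le (Eventually.of_forall fun σ hσ => ?_)
    (((beta_unit ha h.pos ht).1.const_mul M).mul_const _)
  have h0 : 0 ≤ (t - σ) ^ (a - 1) := Real.rpow_nonneg (sub_nonneg.2 hσ.2) _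
  rw [norm_smul, Real.norm_of_nonneg h0]
  calc _ ≤ (t - σ) ^ (a - 1) * ((M * σ ^ (c - 1)) * ‖y‖) := by
        gcongr
        exact ((T σ).le_opNorm y).trans (by gcongr; exact hM σ hσ)
    _ = _ := by ring

end Tame

open Classical in
/-- The bounded operator `S_a(t) : y ↦ J_t^a T(t) y`, set to `0` when that map is not a bounded linear
operator; for a `Tame` family and `a, t > 0` it always is one (`Tame.exists_op`). -/
noncomputable def rlOp (T : ℝ → X →L[ℝ] X) (a t : ℝ) : X →L[ℝ] X :=
  if h : ∃ L : X →L[ℝ] X, ∀ y, L y = RLint a t (fun σ => T σ y) then h.choose else 0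

lemma RLint_congr {a t : ℝ} (ht : 0 < t) {f g : ℝ → X} (h : ∀ σ > 0, f σ = g σ) :
    RLint a t f = RLint a t g := by
  rw [RLint, RLint]
  congr 1
  refine intervalIntegral.integral_congr_ae (Eventually.of_forall fun σ hσ => ?_)
  rw [uIoc_of_le ht.le] at hσ
  simp only [h σ hσ.1]

lemma RLint_one {t : ℝ} (f : ℝ → X) : RLint 1 t f = ∫ σ in (0:ℝ)..t, f σ := by
  simp [RLint]

lemma RLint_sub {a t : ℝ} {f g : ℝ → X}
    (hf : IntervalIntegrable (fun σ => (t - σ) ^ (a - 1) • f σ) volume 0 t)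
    (hg : IntervalIntegrable (fun σ => (t - σ) ^ (a - 1) • g σ) volume 0 t) :
    RLint a t (fun σ => f σ - g σ) = RLint a t f - RLint a t g := by
  simp only [RLint, smul_sub]
  rw [intervalIntegral.integral_sub hf hg, smul_sub]

lemma RLint_clm {a t : ℝ} {f : ℝ → X} (L : X →L[ℝ] X)
    (hf : IntervalIntegrable (fun σ => (t - σ) ^ (a - 1) • f σ) volume 0 t) :
    IntervalIntegrable (fun σ => (t - σ) ^ (a - 1) • L (f σ)) volume 0 t ∧
    RLint a t (fun σ => L (f σ)) = L (RLint a t f) := by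
  simp only [RLint, ← map_smul]
  refine ⟨⟨L.integrable_comp hf.1, L.integrable_comp hf.2⟩, ?_⟩
  rw [L.intervalIntegral_comp_comm hf, map_smul]

/-- `J^a` of a constant is the constant times `g_(a+1)(t) = t^a / Γ(a+1)`. -/
lemma RLint_smul_const {a t : ℝ} (ha : 0 < a) (ht : 0 < t) (y : X) :
    IntervalIntegrable (fun σ : ℝ => (t - σ) ^ (a - 1) • y) volume 0 t ∧
    RLint a t (fun _ => y) = (t ^ a / Real.Gamma (a + 1)) • y := by
  obtain ⟨h1, h2⟩ := beta_unit ha one_pos ht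
  simp only [sub_self, Real.rpow_zero, mul_one, Real.Gamma_one, add_sub_cancel_right] at h1 h2
  refine ⟨⟨Integrable.smul_const h1.1 y, Integrable.smul_const h1.2 y⟩, ?_⟩
  rw [RLint, intervalIntegral.integral_smul_const, h2, smul_smul]
  congr 1
  have := (Real.Gamma_pos_of_pos ha).ne'
  field_simp

namespace Tame

variable {c : ℝ} {T : ℝ → X →L[ℝ] X}

lemma op_apply (h : Tame c T) {a t : ℝ} (ha : 0 < a) (ht : 0 < t) (y : X) :
    rlOp T a t y = RLint a t (fun σ => T σ y) := by
  have := h.exists_op ha ht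
  rw [rlOp, dif_pos this]
  exact this.choose_spec y

/-- `J^a S_b = S_(a+b)`, under a bounded operator `L`. -/
lemma op_op (h : Tame c T) {a b t : ℝ} (ha : 0 < a) (hb : 0 < b) (ht : 0 < t)
    (L : X →L[ℝ] X) (y : X) :
    IntervalIntegrable (fun σ => (t - σ) ^ (a - 1) • L (rlOp T b σ y)) volume 0 t ∧
    RLint a t (fun σ => L (rlOp T b σ y)) = L (rlOp T (a + b) t y) := by
  obtain ⟨h1, h2⟩ := semigroup h.pos (h.adm y) ha hb ht
  have h3 : IntervalIntegrable (fun σ => (t - σ) ^ (a - 1) • rlOp T b σ y) volume 0 t := by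
    refine h1.congr fun σ hσ => ?_
    rw [uIoc_of_le ht.le] at hσ
    simp only [h.op_apply hb hσ.1]
  obtain ⟨h4, h5⟩ := RLint_clm L h3
  refine ⟨h4, ?_⟩
  rw [h5, h.op_apply (add_pos ha hb) ht, ← h2]
  congr 1
  exact RLint_congr ht fun σ hσ => h.op_apply hb hσ y

lemma op_T (h : Tame c T) {a t : ℝ} (ha : 0 < a) (ht : 0 < t)
    (L : X →L[ℝ] X) (y : X) :
    IntervalIntegrable (fun σ => (t - σ) ^ (a - 1) • L (T σ y)) volume 0 t ∧
    RLint a t (fun σ => L (T σ y)) = L (rlOp T a t y) := by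
  obtain ⟨h4, h5⟩ := RLint_clm L (h.intervalIntegrable ha ht y)
  exact ⟨h4, by rw [h5, h.op_apply ha ht]⟩

lemma op_eq_integral (h : Tame c T) {a t : ℝ} (ha : 0 < a) (ht : 0 < t) (y : X) :
    IntervalIntegrable (fun σ => rlOp T a σ y) volume 0 t ∧
    ∫ σ in (0:ℝ)..t, rlOp T a σ y = rlOp T (a + 1) t y := by
  obtain ⟨h1, h2⟩ := h.op_op one_pos ha ht (ContinuousLinearMap.id ℝ X) y
  simp only [sub_self, Real.rpow_zero, one_smul, ContinuousLinearMap.id_apply, RLint_one] at h1 h2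
  exact ⟨h1, by rw [h2, add_comm]⟩

lemma T_eq_integral (h : Tame c T) {t : ℝ} (ht : 0 < t) (y : X) :
    IntervalIntegrable (fun σ => T σ y) volume 0 t ∧
    ∫ σ in (0:ℝ)..t, T σ y = rlOp T 1 t y := by
  obtain ⟨h1, h2⟩ := h.op_T one_pos ht (ContinuousLinearMap.id ℝ X) y
  simpa only [sub_self, Real.rpow_zero, one_smul, ContinuousLinearMap.id_apply, RLint_one]
    using And.intro h1 h2

lemma hasDerivAt_op_one (h : Tame c T) {t : ℝ} (ht : 0 < t) (y : X) :
    HasDerivAt (fun t => rlOp T 1 t y) (T t y) t := by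
  have h1 := intervalIntegral.integral_hasDerivAt_right (h.T_eq_integral ht y).1
    ((h.cont y).stronglyMeasurableAtFilter isOpen_Ioi t ht)
    ((h.cont y).continuousAt (Ioi_mem_nhds ht))
  refine h1.congr_of_eventuallyEq ?_
  filter_upwards [Ioi_mem_nhds ht] with u hu
  exact (h.T_eq_integral hu y).2.symm

lemma continuousOn_op (h : Tame c T) {a : ℝ} (ha : 0 < a) (y : X) :
    ContinuousOn (fun t => rlOp T (a + 1) t y) (Ioi 0) := by
  intro t ht
  have ht' : (0:ℝ) < t + 1 := add_pos ht one_pos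
  have h1 := intervalIntegral.continuousOn_primitive_interval'
    (h.op_eq_integral ha ht' y).1 (left_mem_uIcc)
  rw [uIcc_of_le ht'.le] at h1
  have h2 : ContinuousAt (fun u => ∫ σ in (0:ℝ)..u, rlOp T a σ y) t :=
    h1.continuousAt (Icc_mem_nhds ht (lt_add_one t))
  refine ContinuousAt.continuousWithinAt (h2.congr ?_)
  filter_upwards [Ioi_mem_nhds ht] with u hu
  exact (h.op_eq_integral ha hu y).2

lemma hasDerivAt_op (h : Tame c T) {a t : ℝ} (ha : 0 < a) (ht : 0 < t) (y : X) :
    HasDerivAt (fun t => rlOp T (a + 1 + 1) t y) (rlOp T (a + 1) t y) t := by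
  have ha' := add_pos ha one_pos
  have h1 := intervalIntegral.integral_hasDerivAt_right (h.op_eq_integral ha' ht y).1
    ((h.continuousOn_op ha y).stronglyMeasurableAtFilter isOpen_Ioi t ht)
    ((h.continuousOn_op ha y).continuousAt (Ioi_mem_nhds ht))
  refine h1.congr_of_eventuallyEq ?_
  filter_upwards [Ioi_mem_nhds ht] with u hu
  exact (h.op_eq_integral ha' hu y).2.symm

/-- A bound on `S_a(t)` with constant uniform in `a ≥ 1`, which controls the growth of moments. -/
lemma op_bound (h : Tame c T) {t : ℝ} (ht : 0 < t) :
    ∃ C, 0 ≤ C ∧ ∀ a, 1 ≤ a → ∀ y, ‖rlOp T a t y‖ ≤ (Real.Gamma a)⁻¹ * t ^ (a - 1) * C * ‖y‖ := by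
  obtain ⟨M, hM0, hM⟩ := h.bound t ht
  have hi : IntervalIntegrable (fun σ : ℝ => M * σ ^ (c - 1)) volume 0 t :=
    (intervalIntegral.intervalIntegrable_rpow' (by linarith [h.pos])).const_mul M
  refine ⟨∫ σ in (0:ℝ)..t, M * σ ^ (c - 1), intervalIntegral.integral_nonneg ht.le
    (fun σ hσ => mul_nonneg hM0 (Real.rpow_nonneg hσ.1 _)), fun a ha y => ?_⟩
  have ha0 : 0 < a := one_pos.trans_le ha
  have hΓ := Real.Gamma_pos_of_pos ha0
  rw [h.op_apply ha0 ht, RLint, norm_smul, Real.norm_of_nonneg (inv_pos.2 hΓ).le]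
  simp only [mul_assoc]
  gcongr
  rw [← intervalIntegral.integral_mul_const, ← intervalIntegral.integral_const_mul]
  refine intervalIntegral.norm_integral_le_of_norm_le ht.le (Eventually.of_forall fun σ hσ => ?_)
    ((hi.mul_const _).const_mul _)
  have h0 : 0 ≤ (t - σ) ^ (a - 1) := Real.rpow_nonneg (sub_nonneg.2 hσ.2) _
  have h1 : (t - σ) ^ (a - 1) ≤ t ^ (a - 1) :=
    Real.rpow_le_rpow (sub_nonneg.2 hσ.2) (by linarith [hσ.1]) (by linarith)
  rw [norm_smul, Real.norm_of_nonneg h0]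
  have h2 : ‖T σ y‖ ≤ M * σ ^ (c - 1) * ‖y‖ :=
    ((T σ).le_opNorm y).trans (by gcongr; exact hM σ hσ)
  gcongr

end Tame

/-! ### Double integrals over rectangles -/

/-- Lebesgue measure on the rectangle `(0,t) × (0,s)`. -/
noncomputable abbrev rect (t s : ℝ) : Measure (ℝ × ℝ) :=
  (volume.restrict (Ioo 0 t)).prod (volume.restrict (Ioo 0 s))

lemma rect_ae (t s : ℝ) : ∀ᵐ p ∂rect t s, p ∈ Ioo 0 t ×ˢ Ioo 0 s := by
  rw [rect, Measure.prod_restrict]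
  exact ae_restrict_mem (measurableSet_Ioo.prod measurableSet_Ioo)

lemma integral_Ioo_eq {t : ℝ} (ht : 0 < t) (f : ℝ → X) :
    ∫ σ in Ioo 0 t, f σ = ∫ σ in (0:ℝ)..t, f σ := by
  rw [intervalIntegral.integral_of_le ht.le, integral_Ioc_eq_integral_Ioo]

/-- Admissible functions of two variables: continuous on the open quadrant and
`O(σ^(c-1) τ^(c-1))` near its boundary. -/
def Adm₂ (c : ℝ) (F : ℝ × ℝ → X) : Prop :=
  ContinuousOn F (Ioi 0 ×ˢ Ioi 0) ∧ ∀ t > 0, ∀ s > 0, ∃ M, 0 ≤ M ∧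
    ∀ σ ∈ Ioc 0 t, ∀ τ ∈ Ioc 0 s, ‖F (σ, τ)‖ ≤ M * (σ ^ (c - 1) * τ ^ (c - 1))

namespace Adm₂

variable {c : ℝ} {F : ℝ × ℝ → X}

lemma swap (hF : Adm₂ c F) : Adm₂ c (fun p => F p.swap) := by
  refine ⟨hF.1.comp continuous_swap.continuousOn fun p hp => ⟨hp.2, hp.1⟩, fun t ht s hs => ?_⟩
  obtain ⟨M, h0, hM⟩ := hF.2 s hs t ht
  exact ⟨M, h0, fun σ hσ τ hτ => (hM τ hτ σ hσ).trans_eq (by ring)⟩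

lemma aesm (hF : Adm₂ c F) (t s : ℝ) : AEStronglyMeasurable F (rect t s) := by
  rw [rect, Measure.prod_restrict]
  refine (hF.1.mono ?_).aestronglyMeasurable (measurableSet_Ioo.prod measurableSet_Ioo)
  exact prod_mono Ioo_subset_Ioi_self Ioo_subset_Ioi_self

/-- The product of two Beta integrands, which dominates all double integrals below. -/
lemma majorant (hc : 0 < c) {a b t s : ℝ} (ha : 0 < a) (hb : 0 < b) (ht : 0 < t) (hs : 0 < s)
    (M : ℝ) :
    Integrable (fun p : ℝ × ℝ => M * (((t - p.1) ^ (a - 1) * p.1 ^ (c - 1)) *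
      ((s - p.2) ^ (b - 1) * p.2 ^ (c - 1)))) (rect t s) := by
  refine Integrable.const_mul (Integrable.mul_prod
    (f := fun σ : ℝ => (t - σ) ^ (a - 1) * σ ^ (c - 1))
    (g := fun τ : ℝ => (s - τ) ^ (b - 1) * τ ^ (c - 1)) ?_ ?_) M
  · exact ((intervalIntegrable_iff_integrableOn_Ioo_of_le ht.le).1 (beta_unit ha hc ht).1)
  · exact ((intervalIntegrable_iff_integrableOn_Ioo_of_le hs.le).1 (beta_unit hb hc hs).1)

lemma integrable_mul (hF : Adm₂ c F) (hc : 0 < c) {a b t s : ℝ} (ha : 0 < a) (hb : 0 < b)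
    (ht : 0 < t) (hs : 0 < s) {w : ℝ × ℝ → ℝ} (hw : Measurable w)
    (hwb : ∀ p ∈ Ioo 0 t ×ˢ Ioo 0 s, |w p| ≤ (t - p.1) ^ (a - 1) * (s - p.2) ^ (b - 1)) :
    Integrable (fun p => w p • F p) (rect t s) := by
  obtain ⟨M, h0, hM⟩ := hF.2 t ht s hs
  refine (majorant hc ha hb ht hs M).mono' (hw.aestronglyMeasurable.smul (hF.aesm t s)) ?_
  filter_upwards [rect_ae t s] with p hp
  have h1 := hM p.1 (Ioo_subset_Ioc_self hp.1) p.2 (Ioo_subset_Ioc_self hp.2)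
  rw [norm_smul, Real.norm_eq_abs]
  have h2 : 0 ≤ (t - p.1) ^ (a - 1) * (s - p.2) ^ (b - 1) := (abs_nonneg _).trans (hwb p hp)
  calc _ ≤ ((t - p.1) ^ (a - 1) * (s - p.2) ^ (b - 1)) *
        (M * (p.1 ^ (c - 1) * p.2 ^ (c - 1))) := by
          gcongr; exact hwb p hp
    _ = _ := by ring

/-- Here `|(t+s-σ-τ)^(δ-1)| ≤ (s-τ)^(δ-1)`, since the exponent is nonpositive. -/
lemma integrable_kernel (hF : Adm₂ c F) (hc : 0 < c) {δ t s : ℝ} (hδ : 0 < δ) (hδ1 : δ ≤ 1)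
    (ht : 0 < t) (hs : 0 < s) :
    Integrable (fun p => (t + s - p.1 - p.2) ^ (δ - 1) • F p) (rect t s) := by
  refine hF.integrable_mul hc one_pos hδ ht hs (by fun_prop) fun p hp => ?_
  have h1 : 0 < s - p.2 := sub_pos.2 hp.2.2
  have h2 : s - p.2 ≤ t + s - p.1 - p.2 := by linarith [hp.1.2]
  rw [abs_of_nonneg (Real.rpow_nonneg (h1.le.trans h2) _)]
  simpa using Real.rpow_le_rpow_of_nonpos h1 h2 (by linarith)

/-- The term with kernel `(t+s-σ-τ)^(δ-1)` as an integral over the rectangle. -/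
noncomputable def Q (δ : ℝ) (F : ℝ × ℝ → X) (t s : ℝ) : X :=
  ∫ p, (t + s - p.1 - p.2) ^ (δ - 1) • F p ∂rect t s

lemma Q_swap (δ : ℝ) (F : ℝ × ℝ → X) (t s : ℝ) :
    Q δ (fun p => F p.swap) s t = Q δ F t s := by
  rw [Q, Q, rect, rect, ← integral_prod_swap]
  congr 1
  ext p
  simp only [Prod.fst_swap, Prod.snd_swap, Prod.swap_swap]
  congr 2
  ring

/-- Integrating `Q` in its first variable integrates the kernel, by Fubini on `{σ < r}`. -/
lemma integral_Q (hF : Adm₂ c F) (hc : 0 < c) {δ t s : ℝ} (hδ : 0 < δ) (hδ1 : δ ≤ 1)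
    (ht : 0 < t) (hs : 0 < s) :
    IntervalIntegrable (fun r => Q δ F r s) volume 0 t ∧
    ∫ r in (0:ℝ)..t, Q δ F r s =
      ∫ p, (δ⁻¹ * ((t + s - p.1 - p.2) ^ δ - (s - p.2) ^ δ)) • F p ∂rect t s := by
  obtain ⟨M, h0, hM⟩ := hF.2 t ht s hs
  set μ : Measure ℝ := volume.restrict (Ioo 0 t) with hμ
  let w : ℝ → ℝ × ℝ → ℝ := fun r p => if p.1 < r then (r + s - p.1 - p.2) ^ (δ - 1) else 0
  have hwm : Measurable (Function.uncurry w) := by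
    refine Measurable.ite (measurableSet_lt (by fun_prop) (by fun_prop)) ?_ measurable_const
    fun_prop
  have hwb : ∀ r, ∀ p ∈ Ioo 0 t ×ˢ Ioo 0 s, |w r p| ≤ (s - p.2) ^ (δ - 1) := by
    intro r p hp
    have h1 : 0 < s - p.2 := sub_pos.2 hp.2.2
    simp only [w]
    split_ifs with h
    · have h2 : s - p.2 ≤ r + s - p.1 - p.2 := by linarith
      rw [abs_of_nonneg (Real.rpow_nonneg (h1.le.trans h2) _)]
      exact Real.rpow_le_rpow_of_nonpos h1 h2 (by linarith)
    · simpa using Real.rpow_nonneg h1.le _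
  have hprod : Integrable (Function.uncurry fun r p => w r p • F p) (μ.prod (rect t s)) := by
    have hmaj := (majorant hc one_pos hδ ht hs M).comp_snd μ
    refine hmaj.mono' (hwm.aestronglyMeasurable.smul (hF.aesm t s).comp_snd) ?_
    have h2 : ∀ᵐ z ∂μ.prod (rect t s), z.2 ∈ Ioo 0 t ×ˢ Ioo 0 s :=
      Measure.quasiMeasurePreserving_snd.ae (rect_ae t s)
    filter_upwards [h2] with z hz
    have h1 := hM z.2.1 (Ioo_subset_Ioc_self hz.1) z.2.2 (Ioo_subset_Ioc_self hz.2)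
    have h3 : 0 ≤ (s - z.2.2) ^ (δ - 1) := (abs_nonneg _).trans (hwb z.1 z.2 hz)
    simp only [Function.uncurry, norm_smul, Real.norm_eq_abs]
    calc _ ≤ (s - z.2.2) ^ (δ - 1) * (M * (z.2.1 ^ (c - 1) * z.2.2 ^ (c - 1))) := by
          gcongr; exact hwb _ _ hz
      _ = _ := by simp; ring
  have hinner : ∀ᵐ r ∂μ, ∫ p, w r p • F p ∂rect t s = Q δ F r s := by
    refine (ae_restrict_mem measurableSet_Ioo).mono fun r hr => ?_
    have e1 : ∀ p, w r p • F p = (Iio r ×ˢ univ).indicator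
        (fun p : ℝ × ℝ => (r + s - p.1 - p.2) ^ (δ - 1) • F p) p := by
      intro p
      simp only [w, indicator, mem_prod, mem_Iio, mem_univ, and_true]
      split_ifs <;> simp
    simp_rw [e1]
    rw [integral_indicator (measurableSet_Iio.prod MeasurableSet.univ), Q, rect, rect,
      ← Measure.prod_restrict, Measure.restrict_univ, Measure.restrict_restrict measurableSet_Iio]
    have : Iio r ∩ Ioo 0 t = Ioo 0 r := by
      ext u; simp only [mem_inter_iff, mem_Iio, mem_Ioo]
      exact ⟨fun h => ⟨h.2.1, h.1⟩, fun h => ⟨h.2, h.1, h.2.trans hr.2⟩⟩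
    rw [this]
  constructor
  · rw [intervalIntegrable_iff_integrableOn_Ioo_of_le ht.le]
    exact hprod.integral_prod_left.congr hinner
  · rw [← integral_Ioo_eq ht, ← hμ, ← integral_congr_ae hinner, integral_integral_swap hprod]
    refine integral_congr_ae ?_
    filter_upwards [rect_ae t s] with p hp
    rw [integral_smul_const]
    congr 1
    have e1 : ∀ r, w r p = (Ioi p.1).indicator
        (fun r : ℝ => (r + (s - p.1 - p.2)) ^ (δ - 1)) r := by
      intro r
      simp only [w, indicator, mem_Ioi]
      congr 2; ring
    have e2 : Ioi p.1 ∩ Ioo 0 t = Ioo p.1 t := by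
      ext u; simp only [mem_inter_iff, mem_Ioi, mem_Ioo]
      exact ⟨fun h => ⟨h.1, h.2.2⟩, fun h => ⟨h.1, hp.1.1.trans h.1, h.2⟩⟩
    simp_rw [e1]
    rw [integral_indicator measurableSet_Ioi, hμ, Measure.restrict_restrict measurableSet_Ioi, e2,
      ← integral_Ioc_eq_integral_Ioo, ← intervalIntegral.integral_of_le hp.1.2.le,
      intervalIntegral.integral_comp_add_right (fun u : ℝ => u ^ (δ - 1)),
      integral_rpow (Or.inl (by linarith)), div_eq_inv_mul, sub_add_cancel]
    congr 3 <;> ring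

/-- Integrating `Q` in either variable produces the kernel `(t+s-σ-τ)^δ`, which cancels in the
difference; the remaining kernels depend on one variable only. -/
lemma integral_Q_sub (hF : Adm₂ c F) (hc : 0 < c) {δ t s : ℝ} (hδ : 0 < δ) (hδ1 : δ ≤ 1)
    (ht : 0 < t) (hs : 0 < s) :
    IntervalIntegrable (fun r => Q δ F r s) volume 0 t ∧
    IntervalIntegrable (fun r => Q δ F t r) volume 0 s ∧
    (∫ r in (0:ℝ)..t, Q δ F r s) - ∫ r in (0:ℝ)..s, Q δ F t r =
      δ⁻¹ • ((∫ σ in (0:ℝ)..t, ∫ τ in (0:ℝ)..s, (t - σ) ^ δ • F (σ, τ)) -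
        ∫ σ in (0:ℝ)..t, ∫ τ in (0:ℝ)..s, (s - τ) ^ δ • F (σ, τ)) := by
  obtain ⟨h1, h2⟩ := hF.integral_Q hc hδ hδ1 ht hs
  obtain ⟨h3, h4⟩ := hF.swap.integral_Q hc hδ hδ1 hs ht
  simp only [Q_swap] at h3 h4
  refine ⟨h1, h3, ?_⟩
  have it : ∀ {w : ℝ × ℝ → ℝ}, Measurable w → (∃ K, ∀ p ∈ Ioo 0 t ×ˢ Ioo 0 s, |w p| ≤ K) →
      Integrable (fun p => w p • F p) (rect t s) := by
    rintro w hw ⟨K, hK⟩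
    have hK' : ∀ p ∈ Ioo 0 t ×ˢ Ioo 0 s, |(|K| + 1)⁻¹ * w p| ≤
        (t - p.1) ^ ((1:ℝ) - 1) * (s - p.2) ^ ((1:ℝ) - 1) := by
      intro p hp
      have hpos : 0 < |K| + 1 := by positivity
      simp only [sub_self, Real.rpow_zero, mul_one, abs_mul, abs_inv, abs_of_pos hpos]
      rw [inv_mul_le_iff₀ hpos]
      linarith [hK p hp, le_abs_self K]
    have := (hF.integrable_mul hc one_pos one_pos ht hs (hw.const_mul _) hK').smul (|K| + 1)
    refine this.congr (Eventually.of_forall fun p => ?_)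
    have hpos : |K| + 1 ≠ 0 := by positivity
    simp [smul_smul, hpos]
  have pw : ∀ {u v : ℝ}, 0 ≤ u → u ≤ v → |u ^ δ| ≤ v ^ δ := by
    intro u v hu huv
    rw [abs_of_nonneg (Real.rpow_nonneg hu _)]
    exact Real.rpow_le_rpow hu huv hδ.le
  have i1 : Integrable (fun p : ℝ × ℝ => (t + s - p.1 - p.2) ^ δ • F p) (rect t s) :=
    it (by fun_prop) ⟨(t + s) ^ δ, fun p hp =>
      pw (by linarith [hp.1.2, hp.2.2]) (by linarith [hp.1.1, hp.2.1])⟩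
  have i2 : Integrable (fun p : ℝ × ℝ => (s - p.2) ^ δ • F p) (rect t s) :=
    it (by fun_prop) ⟨s ^ δ, fun p hp => pw (by linarith [hp.2.2]) (by linarith [hp.2.1])⟩
  have i3 : Integrable (fun p : ℝ × ℝ => (t - p.1) ^ δ • F p) (rect t s) :=
    it (by fun_prop) ⟨t ^ δ, fun p hp => pw (by linarith [hp.1.2]) (by linarith [hp.1.1])⟩
  have h4' : ∫ r in (0:ℝ)..s, Q δ F t r =
      ∫ p, (δ⁻¹ * ((t + s - p.1 - p.2) ^ δ - (t - p.1) ^ δ)) • F p ∂rect t s := by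
    rw [h4, rect, rect, ← integral_prod_swap]
    congr 1
    ext p
    simp only [Prod.fst_swap, Prod.snd_swap, Prod.swap_swap]
    congr 4
    ring
  rw [h2, h4']
  simp only [mul_smul, sub_smul]
  rw [integral_smul, integral_smul, integral_sub i1 i2, integral_sub i1 i3, ← smul_sub,
    sub_sub_sub_cancel_left, integral_prod _ i2, integral_prod _ i3]
  simp only [integral_Ioo_eq ht, integral_Ioo_eq hs]

lemma Q_eq (hF : Adm₂ c F) (hc : 0 < c) {δ t s : ℝ} (hδ : 0 < δ) (hδ1 : δ ≤ 1)
    (ht : 0 < t) (hs : 0 < s) :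
    Q δ F t s = ∫ σ in (0:ℝ)..t, ∫ τ in (0:ℝ)..s, (t + s - σ - τ) ^ (δ - 1) • F (σ, τ) := by
  rw [Q, integral_prod _ (hF.integrable_kernel hc hδ hδ1 ht hs)]
  simp only [integral_Ioo_eq ht, integral_Ioo_eq hs]

end Adm₂

namespace Tame

variable {c : ℝ} {T : ℝ → X →L[ℝ] X}

/-- Joint continuity of `(σ, τ) ↦ T(σ)T(τ)x` follows from strong continuity and local boundedness. -/
lemma adm₂ (h : Tame c T) (x : X) : Adm₂ c (fun p => T p.1 (T p.2 x)) := by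
  constructor
  · rintro ⟨σ, τ⟩ ⟨hσ, hτ⟩
    simp only [mem_Ioi] at hσ hτ
    obtain ⟨M, h0, hM⟩ := h.bound (σ + 1) (by linarith)
    refine ContinuousAt.continuousWithinAt ?_
    have c1 : ContinuousAt (fun p : ℝ × ℝ => T p.1 (T τ x)) (σ, τ) :=
      ContinuousAt.comp (g := fun u => T u (T τ x)) (f := Prod.fst)
        ((h.cont (T τ x)).continuousAt (Ioi_mem_nhds hσ)) continuousAt_fst
    have c2 : ContinuousAt (fun p : ℝ × ℝ => T p.2 x) (σ, τ) :=
      ContinuousAt.comp (g := fun u => T u x) (f := Prod.snd)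
        ((h.cont x).continuousAt (Ioi_mem_nhds hτ)) continuousAt_snd
    have c3 : ContinuousAt (fun p : ℝ × ℝ => M * p.1 ^ (c - 1)) (σ, τ) :=
      continuousAt_const.mul (continuousAt_fst.rpow_const (Or.inl hσ.ne'))
    have l1 : Tendsto (fun p : ℝ × ℝ => T p.1 (T p.2 x - T τ x)) (𝓝 (σ, τ)) (𝓝 0) := by
      have l2 : Tendsto (fun p : ℝ × ℝ => (M * p.1 ^ (c - 1)) * ‖T p.2 x - T τ x‖)
          (𝓝 (σ, τ)) (𝓝 0) := by
        have := c3.mul (c2.sub_const (T τ x)).norm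
        simpa [ContinuousAt, Pi.mul_def] using this
      refine squeeze_zero_norm' ?_ l2
      have : ∀ᶠ p : ℝ × ℝ in 𝓝 (σ, τ), p.1 ∈ Ioo 0 (σ + 1) :=
        continuousAt_fst.eventually (Ioo_mem_nhds hσ (lt_add_one σ))
      filter_upwards [this] with p hp
      exact ((T p.1).le_opNorm _).trans
        (mul_le_mul_of_nonneg_right (hM _ (Ioo_subset_Ioc_self hp)) (norm_nonneg _))
    have := l1.add c1
    simpa [ContinuousAt] using this
  · intro t ht s hs
    obtain ⟨M, h0, hM⟩ := h.bound t ht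
    obtain ⟨N, h0', hN⟩ := h.bound s hs
    refine ⟨M * N * ‖x‖, by positivity, fun σ hσ τ hτ => ?_⟩
    have p1 : 0 ≤ σ ^ (c - 1) := Real.rpow_nonneg hσ.1.le _
    calc ‖T σ (T τ x)‖ ≤ ‖T σ‖ * (‖T τ‖ * ‖x‖) :=
          ((T σ).le_opNorm _).trans (by gcongr; exact (T τ).le_opNorm x)
      _ ≤ (M * σ ^ (c - 1)) * ((N * τ ^ (c - 1)) * ‖x‖) := by
          gcongr
          · exact hM σ hσ
          · exact hN τ hτ
      _ = _ := by ring

lemma double_integral (h : Tame c T) {a b t s : ℝ} (ha : 0 < a) (hb : 0 < b) (ht : 0 < t)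
    (hs : 0 < s) (x : X) :
    ∫ σ in (0:ℝ)..t, ∫ τ in (0:ℝ)..s, ((t - σ) ^ (a - 1) * (s - τ) ^ (b - 1)) • T σ (T τ x) =
      (Real.Gamma a * Real.Gamma b) • rlOp T a t (rlOp T b s x) := by
  have hΓa := (Real.Gamma_pos_of_pos ha).ne'
  have hΓb := (Real.Gamma_pos_of_pos hb).ne'
  have e : ∀ σ : ℝ, ∫ τ in (0:ℝ)..s, ((t - σ) ^ (a - 1) * (s - τ) ^ (b - 1)) • T σ (T τ x) =
      Real.Gamma b • (t - σ) ^ (a - 1) • T σ (rlOp T b s x) := by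
    intro σ
    have := (h.op_T hb hs (T σ) x).2
    rw [← this, RLint, smul_comm (Real.Gamma b), smul_smul (Real.Gamma b), mul_inv_cancel₀ hΓb,
      one_smul, ← intervalIntegral.integral_smul]
    simp only [smul_smul]
  simp_rw [e]
  rw [intervalIntegral.integral_smul, h.op_apply ha ht, RLint, smul_smul, mul_comm (Real.Gamma a),
    mul_assoc, mul_inv_cancel₀ hΓa, mul_one]

end Tame

/-! ### The resolvent equation -/

namespace Tame

variable {c δ : ℝ} {T : ℝ → X →L[ℝ] X}

/-- The functional equation of a fractional cosine function in terms of the operators `S_a`. -/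
lemma functional_eq {α : ℝ} (hα : α ∈ Ioo (1:ℝ) 2) (hT : IsRLFracCosine α T) {t s : ℝ}
    (ht : 0 < t) (hs : 0 < s) (x : X) :
    rlOp T 1 (t + s) x = rlOp T (2 - α) t (rlOp T 1 s x) + rlOp T 1 t (rlOp T (2 - α) s x) -
      (Real.Gamma (2 - α))⁻¹ • Adm₂.Q (2 - α) (fun p => T p.1 (T p.2 x)) t s := by
  have h := hT.tame hα
  have hδ : 0 < 2 - α := sub_pos.2 hα.2
  have hΓ := (Real.Gamma_pos_of_pos hδ).ne'
  have e := hT.2.2 x t ht s hs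
  have d1 := h.double_integral hδ one_pos ht hs x
  have d2 := h.double_integral one_pos hδ ht hs x
  have d3 := (h.adm₂ x).Q_eq h.pos hδ (by linarith [hα.1]) ht hs
  simp only [sub_self, Real.rpow_zero, mul_one, one_mul, Real.Gamma_one,
    show 2 - α - 1 = 1 - α by ring] at d1 d2 d3
  rw [d1, d2, ← d3, (h.T_eq_integral (add_pos ht hs) x).2] at e
  have e' := congrArg (fun y => (Real.Gamma (2 - α))⁻¹ • y) e
  simpa only [smul_sub, smul_add, smul_smul, inv_mul_cancel₀ hΓ, one_smul] using e'

lemma integral_shift (h : Tame c T) {t s : ℝ} (ht : 0 < t) (hs : 0 < s) (x : X) :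
    ∫ r in (0:ℝ)..t, rlOp T 1 (r + s) x = rlOp T 2 (t + s) x - rlOp T 2 s x := by
  have h1 := h.op_eq_integral one_pos (add_pos ht hs) x
  have h2 := h.op_eq_integral one_pos hs x
  rw [one_add_one_eq_two] at h1 h2
  rw [intervalIntegral.integral_comp_add_right (fun u => rlOp T 1 u x), ← h1.2, ← h2.2,
    intervalIntegral.integral_interval_sub_left h1.1 h2.1, zero_add]

/-- The functional equation integrated over `(0, t)` in the first variable, minus the same over
`(0, s)` in the second: no term depends on `t + s` any more. -/
lemma separated {α : ℝ} (hα : α ∈ Ioo (1:ℝ) 2) (hT : IsRLFracCosine α T) {t s : ℝ}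
    (ht : 0 < t) (hs : 0 < s) (x : X) :
    rlOp T 2 t (rlOp T (2 - α) s x) - rlOp T (2 - α) t (rlOp T 2 s x) =
      rlOp T 2 t x - rlOp T 2 s x := by
  have h := hT.tame hα
  have hδ : 0 < 2 - α := sub_pos.2 hα.2
  set δ := 2 - α with hδdef
  have hΓ := (Real.Gamma_pos_of_pos hδ).ne'
  obtain ⟨q1, q2, q3⟩ := (h.adm₂ x).integral_Q_sub h.pos hδ (by linarith [hα.1]) ht hs
  have q1' : IntervalIntegrable (fun r => (Real.Gamma δ)⁻¹ •
      Adm₂.Q δ (fun p => T p.1 (T p.2 x)) r s) volume 0 t := q1.smul _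
  have q2' : IntervalIntegrable (fun r => (Real.Gamma δ)⁻¹ •
      Adm₂.Q δ (fun p => T p.1 (T p.2 x)) t r) volume 0 s := q2.smul _
  have d1 := h.double_integral (add_pos hδ one_pos) one_pos ht hs x
  have d2 := h.double_integral one_pos (add_pos hδ one_pos) ht hs x
  simp only [sub_self, Real.rpow_zero, mul_one, one_mul, Real.Gamma_one,
    add_sub_cancel_right] at d1 d2
  rw [d1, d2, ← smul_sub, smul_smul, Real.Gamma_add_one hδ.ne', inv_mul_cancel_left₀ hδ.ne'] at q3
  have jt : rlOp T 2 (t + s) x - rlOp T 2 s x =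
      rlOp T (δ + 1) t (rlOp T 1 s x) + rlOp T 2 t (rlOp T δ s x) -
        (Real.Gamma δ)⁻¹ • ∫ r in (0:ℝ)..t, Adm₂.Q δ (fun p => T p.1 (T p.2 x)) r s := by
    obtain ⟨a1, a2⟩ := h.op_eq_integral hδ ht (rlOp T 1 s x)
    obtain ⟨b1, b2⟩ := h.op_eq_integral one_pos ht (rlOp T δ s x)
    rw [one_add_one_eq_two] at b2
    rw [← h.integral_shift ht hs x, ← a2, ← b2, ← intervalIntegral.integral_smul,
      ← intervalIntegral.integral_add a1 b1, ← intervalIntegral.integral_sub (a1.add b1) q1']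
    refine intervalIntegral.integral_congr_ae (Eventually.of_forall fun r hr => ?_)
    rw [uIoc_of_le ht.le] at hr
    exact functional_eq hα hT hr.1 hs x
  have js : rlOp T 2 (t + s) x - rlOp T 2 t x =
      rlOp T δ t (rlOp T 2 s x) + rlOp T 1 t (rlOp T (δ + 1) s x) -
        (Real.Gamma δ)⁻¹ • ∫ r in (0:ℝ)..s, Adm₂.Q δ (fun p => T p.1 (T p.2 x)) t r := by
    obtain ⟨a1, a2⟩ := h.op_op one_pos one_pos hs (rlOp T δ t) x
    obtain ⟨b1, b2⟩ := h.op_op one_pos hδ hs (rlOp T 1 t) x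
    simp only [sub_self, Real.rpow_zero, one_smul, RLint_one, one_add_one_eq_two] at a1 a2 b1 b2
    rw [add_comm δ 1, add_comm t s, ← h.integral_shift hs ht x, ← a2, ← b2,
      ← intervalIntegral.integral_smul,
      ← intervalIntegral.integral_add a1 b1, ← intervalIntegral.integral_sub (a1.add b1) q2']
    refine intervalIntegral.integral_congr_ae (Eventually.of_forall fun r hr => ?_)
    rw [uIoc_of_le hs.le] at hr
    simp only [add_comm r t]
    exact functional_eq hα hT ht hr.1 x
  have q4 := congrArg (fun y => (Real.Gamma δ)⁻¹ • y) q3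
  simp only [smul_sub, smul_smul, inv_mul_cancel₀ hΓ, one_smul] at q4
  have := congrArg₂ (· - ·) jt js
  beta_reduce at this
  have e : rlOp T 2 t x - rlOp T 2 s x =
      (rlOp T 2 (t + s) x - rlOp T 2 s x) - (rlOp T 2 (t + s) x - rlOp T 2 t x) := by abel
  rw [e, this]
  have q5 := sub_eq_iff_eq_add.1 q4
  rw [q5]
  abel

/-- The result of applying `J^(α-1)` in both variables to `separated`. -/
lemma integrated {α : ℝ} (hα : α ∈ Ioo (1:ℝ) 2) (hT : IsRLFracCosine α T) {t s : ℝ}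
    (ht : 0 < t) (hs : 0 < s) (x : X) :
    rlOp T (α - 1 + 1 + 1) t (rlOp T 1 s x) - rlOp T 1 t (rlOp T (α - 1 + 1 + 1) s x) =
      (s ^ (α - 1) / Real.Gamma (α - 1 + 1)) • rlOp T (α - 1 + 1 + 1) t x -
      (t ^ (α - 1) / Real.Gamma (α - 1 + 1)) • rlOp T (α - 1 + 1 + 1) s x := by
  have h := hT.tame hα
  have hδ : 0 < 2 - α := sub_pos.2 hα.2
  have hc := h.pos
  have x1 : α - 1 + 2 = α - 1 + 1 + 1 := by ring
  have x2 : α - 1 + (2 - α) = 1 := by ring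
  have step : ∀ s > 0, rlOp T (α - 1 + 1 + 1) t (rlOp T (2 - α) s x) - rlOp T 1 t (rlOp T 2 s x) =
      rlOp T (α - 1 + 1 + 1) t x - (t ^ (α - 1) / Real.Gamma (α - 1 + 1)) • rlOp T 2 s x := by
    intro s hs
    obtain ⟨a1, a2⟩ := h.op_op hc two_pos ht (ContinuousLinearMap.id ℝ X) (rlOp T (2 - α) s x)
    obtain ⟨b1, b2⟩ := h.op_op hc hδ ht (ContinuousLinearMap.id ℝ X) (rlOp T 2 s x)
    obtain ⟨c1, c2⟩ := h.op_op hc two_pos ht (ContinuousLinearMap.id ℝ X) x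
    obtain ⟨d1, d2⟩ := RLint_smul_const hc ht (rlOp T 2 s x)
    simp only [ContinuousLinearMap.id_apply, x1, x2] at a1 a2 b1 b2 c1 c2
    rw [← a2, ← b2, ← c2, ← d2, ← RLint_sub a1 b1, ← RLint_sub c1 d1]
    exact RLint_congr ht fun r hr => separated hα hT hr hs x
  obtain ⟨a1, a2⟩ := h.op_op hc hδ hs (rlOp T (α - 1 + 1 + 1) t) x
  obtain ⟨b1, b2⟩ := h.op_op hc two_pos hs (rlOp T 1 t) x
  obtain ⟨c1, c2⟩ := RLint_smul_const hc hs (rlOp T (α - 1 + 1 + 1) t x)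
  obtain ⟨d1, d2⟩ := h.op_op hc two_pos hs
    ((t ^ (α - 1) / Real.Gamma (α - 1 + 1)) • ContinuousLinearMap.id ℝ X) x
  simp only [_root_.smul_apply, ContinuousLinearMap.id_apply, x1, x2]
    at a1 a2 b1 b2 d1 d2
  rw [← a2, ← b2, ← c2, ← d2, ← RLint_sub a1 b1, ← RLint_sub c1 d1]
  exact RLint_congr hs fun r hr => step r hr

lemma hasDerivAt_kernel {c t : ℝ} (hc : 0 < c) (ht : 0 < t) :
    HasDerivAt (fun t : ℝ => t ^ c / Real.Gamma (c + 1)) (t ^ (c - 1) / Real.Gamma c) t := by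
  have h := (Real.hasDerivAt_rpow_const (p := c) (Or.inl ht.ne')).div_const (Real.Gamma (c + 1))
  have e : c * t ^ (c - 1) / Real.Gamma (c + 1) = t ^ (c - 1) / Real.Gamma c := by
    rw [Real.Gamma_add_one hc.ne', mul_div_mul_left _ _ hc.ne']
  rwa [e] at h

/-- The resolvent equation, from two differentiations of `integrated`. Exchanging `t` and `s` and
negating turns it into the equation of `IsRLFracResolvent`. -/
lemma resolvent_eq {α : ℝ} (hα : α ∈ Ioo (1:ℝ) 2) (hT : IsRLFracCosine α T) {t s : ℝ}
    (ht : 0 < t) (hs : 0 < s) (x : X) :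
    rlOp T α t (T s x) - T t (rlOp T α s x) =
      (s ^ (α - 2) / Real.Gamma (α - 1)) • rlOp T α t x -
      (t ^ (α - 2) / Real.Gamma (α - 1)) • rlOp T α s x := by
  have h := hT.tame hα
  have hc := h.pos
  have dt : ∀ s > 0, rlOp T (α - 1 + 1) t (rlOp T 1 s x) - T t (rlOp T (α - 1 + 1 + 1) s x) =
      (s ^ (α - 1) / Real.Gamma (α - 1 + 1)) • rlOp T (α - 1 + 1) t x -
      (t ^ (α - 1 - 1) / Real.Gamma (α - 1)) • rlOp T (α - 1 + 1 + 1) s x := by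
    intro s hs
    have l := (h.hasDerivAt_op hc ht (rlOp T 1 s x)).sub
      (h.hasDerivAt_op_one ht (rlOp T (α - 1 + 1 + 1) s x))
    have r := ((h.hasDerivAt_op hc ht x).const_smul
      (s ^ (α - 1) / Real.Gamma (α - 1 + 1))).sub
      ((hasDerivAt_kernel hc ht).smul_const (rlOp T (α - 1 + 1 + 1) s x))
    refine l.unique (r.congr_of_eventuallyEq ?_)
    filter_upwards [Ioi_mem_nhds ht] with u hu
    exact integrated hα hT hu hs x
  have l := ((rlOp T (α - 1 + 1) t).hasFDerivAt.comp_hasDerivAt s (h.hasDerivAt_op_one hs x)).sub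
    ((T t).hasFDerivAt.comp_hasDerivAt s (h.hasDerivAt_op hc hs x))
  have r := ((hasDerivAt_kernel hc hs).smul_const (rlOp T (α - 1 + 1) t x)).sub
    ((h.hasDerivAt_op hc hs x).const_smul (t ^ (α - 1 - 1) / Real.Gamma (α - 1)))
  have e := l.unique (r.congr_of_eventuallyEq (by
    filter_upwards [Ioi_mem_nhds hs] with u hu
    exact dt u hu))
  simpa only [sub_add_cancel, show α - 1 - 1 = α - 2 by ring] using e

/-! ### Commutativity -/

/-- For `K(t,s) = T(t)T(s)x - T(s)T(t)x`, the identity `J_t^((n+1)α) K = J_s^((n+1)α) K`. The case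
`n = 0` is the antisymmetry of the right side of the resolvent equation. -/
lemma commutator_iterate {α : ℝ} (hα : α ∈ Ioo (1:ℝ) 2) (hT : IsRLFracCosine α T) (x : X)
    (n : ℕ) : ∀ {t s : ℝ}, 0 < t → 0 < s →
    rlOp T ((n + 1) * α) t (T s x) - T s (rlOp T ((n + 1) * α) t x) =
      T t (rlOp T ((n + 1) * α) s x) - rlOp T ((n + 1) * α) s (T t x) := by
  have h := hT.tame hα
  have hα0 : 0 < α := one_pos.trans hα.1
  induction n with
  | zero =>
    intro t s ht hs
    have e1 := resolvent_eq hα hT ht hs x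
    have e2 := resolvent_eq hα hT hs ht x
    simp only [Nat.cast_zero, zero_add, one_mul]
    rw [sub_eq_iff_eq_add] at e1 e2
    rw [e1, e2]
    abel
  | succ n ih =>
    intro t s ht hs
    set a : ℝ := (n + 1) * α with ha
    have ha0 : 0 < a := by positivity
    have x1 : ((n + 1 : ℕ) + 1) * α = a + α := by rw [ha]; push_cast; ring
    rw [x1]
    -- apply `J_t^a` to the case `n = 0`
    have l1 : rlOp T (a + α) t (T s x) - T s (rlOp T (a + α) t x) =
        rlOp T a t (rlOp T α s x) - rlOp T α s (rlOp T a t x) := by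
      obtain ⟨a1, a2⟩ := h.op_op ha0 hα0 ht (ContinuousLinearMap.id ℝ X) (T s x)
      obtain ⟨b1, b2⟩ := h.op_op ha0 hα0 ht (T s) x
      obtain ⟨c1, c2⟩ := h.op_T ha0 ht (ContinuousLinearMap.id ℝ X) (rlOp T α s x)
      obtain ⟨d1, d2⟩ := h.op_T ha0 ht (rlOp T α s) x
      simp only [ContinuousLinearMap.id_apply] at a1 a2 c1 c2
      rw [← a2, ← b2, ← c2, ← d2, ← RLint_sub a1 b1, ← RLint_sub c1 d1]
      refine RLint_congr ht fun r hr => ?_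
      have e1 := resolvent_eq hα hT hr hs x
      have e2 := resolvent_eq hα hT hs hr x
      rw [sub_eq_iff_eq_add] at e1 e2
      rw [e1, e2]
      abel
    -- apply `J_s^α` to the induction hypothesis
    have l2 : rlOp T a t (rlOp T α s x) - rlOp T α s (rlOp T a t x) =
        T t (rlOp T (a + α) s x) - rlOp T (a + α) s (T t x) := by
      obtain ⟨a1, a2⟩ := h.op_T hα0 hs (rlOp T a t) x
      obtain ⟨b1, b2⟩ := h.op_T hα0 hs (ContinuousLinearMap.id ℝ X) (rlOp T a t x)
      obtain ⟨c1, c2⟩ := h.op_op hα0 ha0 hs (T t) x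
      obtain ⟨d1, d2⟩ := h.op_op hα0 ha0 hs (ContinuousLinearMap.id ℝ X) (T t x)
      simp only [ContinuousLinearMap.id_apply] at b1 b2 d1 d2
      rw [add_comm a α, ← a2, ← b2, ← c2, ← d2, ← RLint_sub a1 b1, ← RLint_sub c1 d1]
      exact RLint_congr hs fun r hr => ih ht hr
    rw [l1, l2]

/-- The commutator `K(t₀, s)` vanishes: with `t = t₀ + s + 1`, the function
`u ↦ u^(α-1) K(t-u, s)` has moments of order `(s^α)^m`, so it vanishes on `(s, t)`, which contains
`t - t₀`. -/
lemma commute {α : ℝ} (hα : α ∈ Ioo (1:ℝ) 2) (hT : IsRLFracCosine α T) {t₀ s : ℝ}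
    (ht₀ : 0 < t₀) (hs : 0 < s) (x : X) : T s (T t₀ x) = T t₀ (T s x) := by
  have h := hT.tame hα
  have hα0 : 0 < α := one_pos.trans hα.1
  set t := t₀ + s + 1 with htdef
  have ht : 0 < t := by positivity
  let K : ℝ → X := fun σ => T σ (T s x) - T s (T σ x)
  have hK : ContinuousOn K (Ioi 0) :=
    (h.cont (T s x)).sub ((T s).continuous.comp_continuousOn (h.cont x))
  have hKi : ∀ {a : ℝ}, 0 < a →
      IntervalIntegrable (fun σ => (t - σ) ^ (a - 1) • K σ) volume 0 t ∧
      RLint a t K = rlOp T a t (T s x) - T s (rlOp T a t x) := by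
    intro a ha
    obtain ⟨a1, a2⟩ := h.op_T ha ht (ContinuousLinearMap.id ℝ X) (T s x)
    obtain ⟨b1, b2⟩ := h.op_T ha ht (T s) x
    simp only [ContinuousLinearMap.id_apply] at a1 a2
    refine ⟨?_, by rw [← a2, ← b2, ← RLint_sub a1 b1]⟩
    simpa only [K, smul_sub] using a1.sub b1
  let f : ℝ → X := fun u => u ^ (α - 1) • K (t - u)
  have hf : IntervalIntegrable f volume 0 t := by
    have := (hKi hα0).1.comp_sub_left t
    simpa [f] using this.symm
  obtain ⟨C, hC0, hC⟩ := h.op_bound hs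
  -- up to the factor `Γ((m+1)α)` the moments are `J_t^((m+1)α) K = J_s^((m+1)α) K`
  have hmom : ∀ m : ℕ, ‖∫ u in (0:ℝ)..t, (u ^ α) ^ m • f u‖ ≤
      (s ^ (α - 1) * (‖T t‖ * C * ‖x‖ + C * ‖T t x‖)) * (s ^ α) ^ m := by
    intro m
    set a : ℝ := (m + 1) * α with ha
    have ha1 : 1 ≤ a := by
      have : (0:ℝ) ≤ m := Nat.cast_nonneg m
      nlinarith [hα.1]
    have ha0 : 0 < a := one_pos.trans_le ha1
    have hΓ := Real.Gamma_pos_of_pos ha0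
    have pw : ∀ u : ℝ, 0 < u → (u ^ α) ^ m * u ^ (α - 1) = u ^ (a - 1) := by
      intro u hu
      rw [← Real.rpow_natCast, ← Real.rpow_mul hu.le, ← Real.rpow_add hu]
      congr 1
      rw [ha]; ring
    have e1 : ∫ u in (0:ℝ)..t, (u ^ α) ^ m • f u = Real.Gamma a • RLint a t K := by
      rw [RLint, smul_smul, mul_inv_cancel₀ hΓ.ne', one_smul]
      have := intervalIntegral.integral_comp_sub_left (a := 0) (b := t)
        (fun σ => (t - σ) ^ (a - 1) • K σ) t
      simp only [sub_sub_cancel, sub_self, sub_zero] at this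
      rw [← this]
      refine intervalIntegral.integral_congr_ae (Eventually.of_forall fun u hu => ?_)
      rw [uIoc_of_le ht.le] at hu
      simp only [f, smul_smul, pw u hu.1]
    rw [e1, (hKi ha0).2, ha, commutator_iterate hα hT x m ht hs, ← ha, norm_smul,
      Real.norm_of_nonneg hΓ.le]
    have n1 : ‖T t (rlOp T a s x)‖ ≤
        ‖T t‖ * ((Real.Gamma a)⁻¹ * s ^ (a - 1) * C * ‖x‖) :=
      ((T t).le_opNorm _).trans (by gcongr; exact hC a ha1 x)
    have n2 := hC a ha1 (T t x)
    calc _ ≤ Real.Gamma a * (‖T t‖ * ((Real.Gamma a)⁻¹ * s ^ (a - 1) * C * ‖x‖) +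
          (Real.Gamma a)⁻¹ * s ^ (a - 1) * C * ‖T t x‖) := by
          gcongr
          exact (norm_sub_le _ _).trans (add_le_add n1 n2)
      _ = _ := by
          rw [← pw s hs]
          field_simp
  -- hence the primitive of `f` is constant beyond `s`
  have hconst : ∀ ρ ∈ Ioo s t, ∫ u in (0:ℝ)..ρ, f u = ∫ u in (0:ℝ)..t, f u := by
    intro ρ hρ
    exact moment hα0 (Real.rpow_pos_of_pos hs α) (hs.trans hρ.1)
      (Real.rpow_lt_rpow hs.le hρ.1 hα0) hρ.2.le hf hmom
  set u₀ := t - t₀ with hu₀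
  have hu : u₀ ∈ Ioo s t := ⟨by rw [hu₀, htdef]; linarith, by rw [hu₀]; linarith⟩
  have hu0 : 0 < u₀ := hs.trans hu.1
  have hfc : ContinuousOn f (Ioo s t) := by
    refine ContinuousOn.smul (fun u hu => ?_) (hK.comp (by fun_prop) fun u hu => sub_pos.2 hu.2)
    exact (Real.continuousAt_rpow_const u _ (Or.inl (hs.trans hu.1).ne')).continuousWithinAt
  have hd := intervalIntegral.integral_hasDerivAt_right (a := 0) (b := u₀)
    (hf.mono_set (by
      rw [uIcc_of_le hu0.le, uIcc_of_le ht.le]; exact Icc_subset_Icc_right hu.2.le))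
    (hfc.stronglyMeasurableAtFilter isOpen_Ioo u₀ hu)
    (hfc.continuousAt (Ioo_mem_nhds hu.1 hu.2))
  have hd0 : HasDerivAt (fun u => ∫ x in (0:ℝ)..u, f x) 0 u₀ := by
    refine (hasDerivAt_const u₀ (∫ u in (0:ℝ)..t, f u)).congr_of_eventuallyEq ?_
    filter_upwards [Ioo_mem_nhds hu.1 hu.2] with u hu
    exact hconst u hu
  have hz := hd.unique hd0
  have hz' : K t₀ = 0 := by
    have hp : u₀ ^ (α - 1) ≠ 0 := (Real.rpow_pos_of_pos hu0 _).ne'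
    have := (smul_eq_zero.1 hz).resolve_left hp
    simpa [hu₀] using this
  exact (sub_eq_zero.1 hz').symm

end Tame

end

/-- Every Riemann-Liouville `α`-order fractional cosine function is a Riemann-Liouville
`α`-order fractional resolvent. -/
theorem rl_frac_cosine_is_resolvent
    {X : Type*} [NormedAddCommGroup X] [NormedSpace ℝ X] [CompleteSpace X]
    (α : ℝ) (hα : α ∈ Set.Ioo (1:ℝ) 2) (T : ℝ → X →L[ℝ] X)
    (hT : IsRLFracCosine α T) :
    IsRLFracResolvent α T := by
  have h := hT.tame hα
  have hα0 : 0 < α := one_pos.trans hα.1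
  have hΓ := (Real.Gamma_pos_of_pos h.pos).ne'
  refine ⟨fun x => ⟨hT.1 x, ?_⟩, fun t ht s hs x => Tame.commute hα hT ht hs x,
    fun x t ht s hs => ?_⟩
  · have := (hT.2.1 x).const_smul (Real.Gamma (α - 1))
    simpa only [smul_smul, mul_inv_cancel₀ hΓ, one_smul] using this
  · have := Tame.resolvent_eq hα hT hs ht x
    rw [← h.op_apply hα0 ht, ← h.op_apply hα0 hs, ← h.op_apply hα0 hs, ← neg_sub, this, neg_sub]
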